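/- (Corollary 2, augmented-alphabet form) Let P' = Option P be the alphabet P augmented with a novel symbol ψ = none (so elements of P embed as some s), let I' = (P')^n, and for τ' ∈ P' let T'_{q,τ'} denote the transition operator on functions I' → ℝ defined by the same formula as T with alphabet P' and fill value τ'. For x : I → ℝ let ι x : I' → ℝ be the extension by zero: (ι x)(v) = x(u) if v = (some) ∘ u for some u ∈ I, and (ι x)(v) = 0 otherwise. Then for any mask distribution q on M, any τ ∈ P, and any x₁, x₂ : I → ℝ: if T_{q,τ} x₁ = T_{q,τ} x₂, then T'_{q,ψ}(ι x₁) = T'_{q,ψ}(ι x₂). Hence using the distinguished fill value ψ, which identifies exactly which entries are missing, does not make two indistinguishable data distributions distinguishable. -/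

import Mathlib

/-!
Put `x = x₁ - x₂`, so `T_{q,τ} x = 0`. Summing `(T_{q,τ} x)(w)` over all `w` that agree with `v` on
the coordinates observed by a mask `m` gives
`0 = ∑_{m'} q(m') [v = τ on m \ m'] x([v]_{m ∩ m'})`.
By induction on `m`, this shows that `x([v]_m) = 0` whenever `m` is contained in some mask of
positive probability (`marg_eq_zero`): a term with `q(m') ≠ 0` and `m ⊄ m'` involves the strictly
smaller mask `m ∩ m'`, which lies below `m'`, so it vanishes; what remains is
`(∑_{m' ≥ m} q(m')) x([v]_m)`, with a positive coefficient.
Finally, with fill value `none` the operator only sees the marginals over masks `m` weighted by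
`q(m)` (`T_iota`), and these are all zero.
-/

open Finset
open scoped Classical

/-- The transition operator `T_{q,τ}`: for a mask distribution `q` on masks
`Fin n → Bool`, a fill-in value `τ`, and `x : (Fin n → P) → ℝ`,
`(T q τ x) v = ∑_{m} ∑_{u} q m * x u * [f_τ(u, m) = v]`, where the masking
operator is `f_τ(u,m) d = if m d then u d else τ`. -/
noncomputable def T {n : ℕ} {P : Type*} [Fintype P] [DecidableEq P]
    (q : (Fin n → Bool) → ℝ) (τ : P) (x : (Fin n → P) → ℝ) : (Fin n → P) → ℝ :=
  fun v => ∑ m : Fin n → Bool, ∑ u : Fin n → P,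
    q m * x u * (if (fun d => if m d then u d else τ) = v then (1 : ℝ) else 0)

/-- The marginal `x([v]_m) = ∑_{u ∈ [v]_m} x u`, where `u ∈ [v]_m` iff
`u` agrees with `v` on every coordinate observed by the mask `m`. -/
noncomputable def marg {n : ℕ} {P : Type*} [Fintype P] [DecidableEq P]
    (x : (Fin n → P) → ℝ) (m : Fin n → Bool) (v : Fin n → P) : ℝ :=
  ∑ u : Fin n → P, if (∀ d, m d = true → v d = u d) then x u else 0

/-- Extension by zero of `x : (Fin n → P) → ℝ` to the augmented alphabet
`Option P`: `(ι x)(v) = x u` if `v = some ∘ u`, and `0` otherwise. -/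
noncomputable def iota {n : ℕ} {P : Type*} [Fintype P] [DecidableEq P]
    (x : (Fin n → P) → ℝ) : (Fin n → Option P) → ℝ :=
  fun v => ∑ u : Fin n → P, if (fun d => some (u d)) = v then x u else 0

lemma T_sub {n : ℕ} {P : Type*} [Fintype P] [DecidableEq P]
    (q : (Fin n → Bool) → ℝ) (τ : P) (x y : (Fin n → P) → ℝ) :
    T q τ (x - y) = T q τ x - T q τ y := by
  funext v
  simp only [T, Pi.sub_apply, ← Finset.sum_sub_distrib]
  refine Finset.sum_congr rfl fun m _ => Finset.sum_congr rfl fun u _ => ?_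
  ring

lemma iota_sub {n : ℕ} {P : Type*} [Fintype P] [DecidableEq P]
    (x y : (Fin n → P) → ℝ) : iota (x - y) = iota x - iota y := by
  funext v
  simp only [iota, Pi.sub_apply, ← Finset.sum_sub_distrib]
  refine Finset.sum_congr rfl fun u _ => ?_
  split_ifs <;> simp

/-- The sum of `T q τ x` over the cylinder `[v]_m`, as a combination of marginals of `x`. -/
lemma marg_T {n : ℕ} {P : Type*} [Fintype P] [DecidableEq P]
    (q : (Fin n → Bool) → ℝ) (τ : P) (x : (Fin n → P) → ℝ) (m : Fin n → Bool) (v : Fin n → P) :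
    marg (T q τ x) m v =
      ∑ m' : Fin n → Bool, q m' *
        if (∀ d, m d = true → m' d = false → v d = τ) then marg x (m ⊓ m') v else 0 := by
  have h1 : marg (T q τ x) m v = ∑ m' : Fin n → Bool, ∑ u : Fin n → P, q m' * x u *
      (if (∀ d, m d = true → v d = if m' d then u d else τ) then (1 : ℝ) else 0) := by
    have h2 : ∀ w : Fin n → P, (if (∀ d, m d = true → v d = w d) then T q τ x w else 0) =
        ∑ m' : Fin n → Bool, ∑ u : Fin n → P,
          if (fun d => if m' d then u d else τ) = w then
            q m' * x u * (if (∀ d, m d = true → v d = w d) then (1 : ℝ) else 0) else 0 := by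
      intro w
      by_cases hw : ∀ d, m d = true → v d = w d
      · simp only [if_pos hw, T]
        refine Finset.sum_congr rfl fun m' _ => Finset.sum_congr rfl fun u _ => ?_
        split_ifs <;> simp
      · simp [if_neg hw]
    unfold marg
    rw [Finset.sum_congr rfl fun w _ => h2 w, Finset.sum_comm]
    refine Finset.sum_congr rfl fun m' _ => ?_
    rw [Finset.sum_comm]
    refine Finset.sum_congr rfl fun u _ => ?_
    rw [Finset.sum_eq_single (fun d => if m' d then u d else τ)]
    · simp
    · intro w _ hw
      rw [if_neg (Ne.symm hw)]
    · simp
  rw [h1]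
  refine Finset.sum_congr rfl fun m' _ => ?_
  have key : ∀ u : Fin n → P, (∀ d, m d = true → v d = if m' d then u d else τ) ↔
      (∀ d, m d = true → m' d = false → v d = τ) ∧ ∀ d, (m ⊓ m') d = true → v d = u d := by
    intro u
    rw [← forall_and]
    refine forall_congr' fun d => ?_
    cases hm : m d <;> cases hm' : m' d <;> simp [hm, hm']
  simp only [key]
  by_cases hv : ∀ d, m d = true → m' d = false → v d = τ
  · rw [if_pos hv, marg, Finset.mul_sum]
    refine Finset.sum_congr rfl fun u _ => ?_
    by_cases hu : ∀ d, (m ⊓ m') d = true → v d = u d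
    · rw [if_pos ⟨hv, hu⟩, if_pos hu, mul_one]
    · rw [if_neg fun h => hu h.2, if_neg hu]
      simp
  · rw [if_neg hv, mul_zero]
    refine Finset.sum_eq_zero fun u _ => ?_
    rw [if_neg fun h => hv h.1, mul_zero]

/-- A kernel element of `T q τ` has vanishing marginals on every mask contained in a mask of
positive probability. Allowing `m` to be strictly below `m₀` is what makes the induction work, since
`m ⊓ m'` need not itself have positive probability. -/
lemma marg_eq_zero {n : ℕ} {P : Type*} [Fintype P] [DecidableEq P]
    (q : (Fin n → Bool) → ℝ) (hq0 : ∀ m, 0 ≤ q m) (τ : P) (x : (Fin n → P) → ℝ)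
    (hx : T q τ x = 0) (m : Fin n → Bool) :
    ∀ m₀, m ≤ m₀ → q m₀ ≠ 0 → ∀ v, marg x m v = 0 := by
  induction m using WellFoundedLT.induction with
  | ind m ih =>
    intro m₀ hm₀ hq v
    have h := marg_T q τ x m v
    have h0 : marg (T q τ x) m v = 0 := by simp [hx, marg]
    have h2 : ∀ m' : Fin n → Bool, (q m' *
        if (∀ d, m d = true → m' d = false → v d = τ) then marg x (m ⊓ m') v else 0) =
        (if m ≤ m' then q m' else 0) * marg x m v := by
      intro m'
      by_cases hle : m ≤ m'
      · have hc : ∀ d, m d = true → m' d = false → v d = τ := by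
          intro d h1 h2
          have : m d = true → m' d = true := hle d
          exact absurd (this h1) (by simp [h2])
        rw [if_pos hle, if_pos hc, inf_eq_left.mpr hle]
      · rw [if_neg hle, zero_mul]
        by_cases hq' : q m' = 0
        · simp [hq']
        · rw [ih (m ⊓ m') (inf_lt_left.mpr hle) m' inf_le_right hq' v]
          simp
    rw [h0, Finset.sum_congr rfl fun m' _ => h2 m', ← Finset.sum_mul] at h
    have hpos : 0 < ∑ m' : Fin n → Bool, if m ≤ m' then q m' else 0 := by
      refine Finset.sum_pos' (fun m' _ => ?_) ⟨m₀, Finset.mem_univ _, ?_⟩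
      · split_ifs
        · exact hq0 m'
        · exact le_rfl
      · rw [if_pos hm₀]
        exact lt_of_le_of_ne (hq0 m₀) hq.symm
    exact (mul_eq_zero.mp h.symm).resolve_left hpos.ne'

lemma T_iota {n : ℕ} {P : Type*} [Fintype P] [DecidableEq P]
    (q : (Fin n → Bool) → ℝ) (x : (Fin n → P) → ℝ) (w : Fin n → Option P) :
    T (P := Option P) q none (iota x) w =
      ∑ m : Fin n → Bool, q m * ∑ u : Fin n → P,
        if (fun d => if m d then some (u d) else none) = w then x u else 0 := by
  unfold T iota
  refine Finset.sum_congr rfl fun m _ => ?_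
  simp only [Finset.mul_sum, Finset.sum_mul]
  rw [Finset.sum_comm]
  refine Finset.sum_congr rfl fun u _ => ?_
  rw [Finset.sum_eq_single (fun d => some (u d))]
  · simp
  · intro b _ hb
    rw [if_neg (Ne.symm hb)]
    simp
  · simp

/-- Corollary 2 (augmented-alphabet form): if two data distributions are
indistinguishable after masking with fill value `τ ∈ P`, they remain
indistinguishable when masked over the augmented alphabet `Option P` with the
distinguished fill value `ψ = none` marking exactly the missing entries. -/
theorem stmt15 {n : ℕ} (hn : 1 ≤ n) {P : Type*} [Fintype P] [Nonempty P] [DecidableEq P]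
    (q : (Fin n → Bool) → ℝ) (hq0 : ∀ m, 0 ≤ q m)
    (hq1 : (∑ m : Fin n → Bool, q m) = 1)
    (τ : P) (x₁ x₂ : (Fin n → P) → ℝ)
    (h : T q τ x₁ = T q τ x₂) :
    T (P := Option P) q none (iota x₁) = T (P := Option P) q none (iota x₂) := by
  have hx : T q τ (x₁ - x₂) = 0 := by rw [T_sub, h, sub_self]
  rw [← sub_eq_zero, ← T_sub, ← iota_sub]
  funext w
  rw [T_iota]
  refine Finset.sum_eq_zero fun m _ => ?_
  by_cases hqm : q m = 0
  · rw [hqm, zero_mul]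
  -- The vectors masked to `w` by `m` are either none at all or exactly the class `[u₀]_m`.
  by_cases hw : ∃ u₀ : Fin n → P, (fun d => if m d then some (u₀ d) else none) = w
  · obtain ⟨u₀, rfl⟩ := hw
    have hm := marg_eq_zero q hq0 τ (x₁ - x₂) hx m m le_rfl hqm u₀
    rw [marg] at hm
    refine mul_eq_zero_of_right _ (Eq.trans ?_ hm)
    refine Finset.sum_congr rfl fun u _ => ?_
    refine if_congr ?_ rfl rfl
    rw [funext_iff]
    refine forall_congr' fun d => ?_
    cases m d <;> simp [eq_comm]
  · rw [Finset.sum_eq_zero fun u _ => if_neg fun hu => hw ⟨u, hu⟩, mul_zero]
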